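/- Let (R, 𝔪, k) be a commutative noetherian local ring whose maximal ideal 𝔪 is quasi-decomposable with an R-regular sequence 𝐱 of length n, i.e., 𝔪/(𝐱) is decomposable. If M is a finitely generated R-module with pd_R M ≥ n + 2, then the residue field k belongs to the thick closure thick_{mod R}{R, M}. -/

import Mathlib

/-!
Write `q = (𝐱)`; the hypothesis says that `𝔪 = I + J` with `I ∩ J = q` and `I, J ≠ q`. Let `𝒯` be
a thick subcategory containing `R` and `M`.

*Reduction modulo `𝐱`.* Take a minimal free resolution of `M`, as a sequence of matrices over `R`.
If the matrices are exact on the powers of a module `E` and `c` is `E`-regular, then they are exact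
on the powers of `E/cE` after dropping the first one (`ExactOn.quotSMulTop`); and if `E` and the
cokernel of the first matrix on `E` lie in `𝒯`, so do `E/cE` and the cokernel of the second matrix
on `E/cE`, the latter being the first syzygy modulo `c` (`IsThickSubcat.coker_quotSMulTop`).
Running through `𝐱` yields an exact minimal sequence `⋯ → E₂ → E₁ → E₀` of powers of `R/q` with
cokernel in `𝒯`, and with `E₂ ≠ 0` because `pd M ≥ n + 2`.

*The decomposable case.* The kernel `K` of `E₁ → E₀` is a nonzero member of `𝒯` contained in
`𝔪 E₁ = I E₁ ⊕ J E₁`. A matrix respects such decompositions, so `K` is the direct sum of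
`K ∩ I E₁`, annihilated by `J`, and `K ∩ J E₁`, annihilated by `I` (`ker_inter_mem`); one of them
is nonzero. If a nonzero module `X` in `𝒯` is annihilated by `J`, then the kernel of a minimal cover
`(R/q)^s → X` contains `(J/q)^s` and lies in `(I/q)^s ⊕ (J/q)^s`, so `J/q` is a direct summand of
it and lies in `𝒯` (`mem_of_annihilated`). Applying this again to `X = J/q`, which is annihilated by
`I`, gives `I/q ∈ 𝒯`. Hence `𝔪/q = I/q ⊕ J/q` lies in `𝒯`, and with it `k = (R/q)/(𝔪/q)`.
-/

universe u

open IsLocalRing CategoryTheory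

/-- A minimal free resolution of the module `M` over the local ring `R`:
`⋯ → R^{rank 2} → R^{rank 1} → R^{rank 0} → M → 0` is exact, and each differential maps into
`𝔪` times the next free module (minimality). -/
structure MinimalFreeResolution (R : Type u) [CommRing R] [IsLocalRing R]
    (M : Type u) [AddCommGroup M] [Module R M] where
  rank : ℕ → ℕ
  aug : (Fin (rank 0) → R) →ₗ[R] M
  d : (i : ℕ) → ((Fin (rank (i + 1)) → R) →ₗ[R] (Fin (rank i) → R))
  aug_surjective : Function.Surjective aug
  exact_aug : LinearMap.ker aug = LinearMap.range (d 0)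
  exact : ∀ i, LinearMap.ker (d i) = LinearMap.range (d (i + 1))
  minimal : ∀ i, LinearMap.range (d i) ≤
    (maximalIdeal R) • (⊤ : Submodule R (Fin (rank i) → R))

/-- `S` is an `i`-th syzygy `Ω^i M` of `M`, i.e. the `i`-th kernel computed from a minimal free
resolution of `M` over the local ring `R` (`Ω⁰M = M`, `Ω¹M = ker aug`, `Ω^{j+2}M = ker (d j)`). -/
def IsNthSyzygy (R : Type u) [CommRing R] [IsLocalRing R] (i : ℕ)
    (M : Type u) [AddCommGroup M] [Module R M]
    (S : Type u) [AddCommGroup S] [Module R S] : Prop :=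
  ∃ F : MinimalFreeResolution R M,
    match i with
    | 0 => Nonempty (S ≃ₗ[R] M)
    | 1 => Nonempty (S ≃ₗ[R] LinearMap.ker F.aug)
    | (j + 2) => Nonempty (S ≃ₗ[R] LinearMap.ker (F.d j))

/-- `pd_R M ≤ n`: a minimal free resolution of `M` vanishes in homological degrees `> n`. -/
def ProjDimLE (R : Type u) [CommRing R] [IsLocalRing R]
    (M : Type u) [AddCommGroup M] [Module R M] (n : ℕ) : Prop :=
  ∃ F : MinimalFreeResolution R M, ∀ i, n < i → F.rank i = 0

/-- `A` is a direct summand of the `R`-module `X`. -/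
def IsDirectSummand (R : Type u) [CommRing R] (A X : Type u)
    [AddCommGroup A] [Module R A] [AddCommGroup X] [Module R X] : Prop :=
  ∃ (ι : A →ₗ[R] X) (π : X →ₗ[R] A), π.comp ι = LinearMap.id

/-- A thick subcategory of `mod R` (the finitely generated `R`-modules): a collection of (f.g.)
modules, closed under isomorphism and direct summands, satisfying two-out-of-three for short
exact sequences. -/
structure IsThickSubcat (R : Type u) [CommRing R] (P : ModuleCat.{u} R → Prop) : Prop where
  fg : ∀ A, P A → Module.Finite R A
  iso_closed : ∀ A B : ModuleCat.{u} R, Nonempty (A ≃ₗ[R] B) → P A → P B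
  summand_closed : ∀ A B : ModuleCat.{u} R,
    (∃ (ι : B →ₗ[R] A) (π : A →ₗ[R] B), π.comp ι = LinearMap.id) → P A → P B
  two_of_three : ∀ (A B C : ModuleCat.{u} R) (f : A →ₗ[R] B) (g : B →ₗ[R] C),
    Function.Injective f → Function.Surjective g → LinearMap.ker g = LinearMap.range f →
    ((P A → P B → P C) ∧ (P A → P C → P B) ∧ (P B → P C → P A))

/-- A module is decomposable if it is the (internal) direct sum of two nonzero submodules. -/
def IsDecomposableModule (A : Type u) [CommRing A] (M : Type u) [AddCommGroup M]
    [Module A M] : Prop :=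
  ∃ N₁ N₂ : Submodule A M, N₁ ≠ ⊥ ∧ N₂ ≠ ⊥ ∧ N₁ ⊓ N₂ = ⊥ ∧ N₁ ⊔ N₂ = ⊤

/-- The maximal ideal `𝔪` of `R` is quasi-decomposable: there is an `R`-regular sequence `𝐱` in
`𝔪` such that `𝔪/(𝐱)` is decomposable. -/
def HasQuasiDecomposableMaxIdeal (R : Type u) [CommRing R] [IsLocalRing R] : Prop :=
  ∃ x : List R, (∀ a ∈ x, a ∈ maximalIdeal R) ∧ RingTheory.Sequence.IsRegular R x ∧
    IsDecomposableModule (R ⧸ Ideal.ofList x)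
      (↥((maximalIdeal R).map (Ideal.Quotient.mk (Ideal.ofList x))))

/-! ### Minimal free resolutions -/

theorem mem_smul_top_pi_iff {R : Type u} [CommRing R] (I : Ideal R) {n : ℕ}
    (v : Fin n → R) : v ∈ I • (⊤ : Submodule R (Fin n → R)) ↔ ∀ i, v i ∈ I := by
  constructor
  · intro hv i
    refine Submodule.smul_induction_on hv (fun r hr w _ => ?_) (fun a b ha hb => ?_)
    · exact I.mul_mem_right _ hr
    · exact I.add_mem ha hb
  · intro h
    rw [pi_eq_sum_univ' v]
    refine Submodule.sum_mem _ fun i _ => Submodule.smul_mem_smul (h i) trivial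

/-- A surjection from a free module of the least possible rank has its kernel inside `𝔪 R^s`. -/
theorem exists_minimal_cover {R : Type u} [CommRing R] [IsLocalRing R]
    (M : Type u) [AddCommGroup M] [Module R M] [Module.Finite R M] :
    ∃ (s : ℕ) (f : (Fin s → R) →ₗ[R] M), Function.Surjective f ∧
      LinearMap.ker f ≤ maximalIdeal R • (⊤ : Submodule R (Fin s → R)) := by
  classical
  have hex : ∃ s : ℕ, ∃ f : (Fin s → R) →ₗ[R] M, Function.Surjective f :=
    Module.Finite.exists_fin' R M
  obtain ⟨f, hf⟩ := Nat.find_spec hex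
  have hmin : ∀ t, t < Nat.find hex → ¬ ∃ f : (Fin t → R) →ₗ[R] M, Function.Surjective f :=
    fun t ht => Nat.find_min hex ht
  generalize Nat.find hex = s at f hmin
  refine ⟨s, f, hf, fun v hv => ?_⟩
  rw [mem_smul_top_pi_iff]
  intro j
  by_contra hj
  have hu : IsUnit (v j) := by simpa [mem_maximalIdeal] using hj
  obtain ⟨c, hc⟩ := hu.exists_left_inv
  cases s with
  | zero => exact j.elim0
  | succ t =>
    -- the `j`-th generator is a combination of the others, so it can be dropped
    let ins : (Fin t → R) →ₗ[R] (Fin (t + 1) → R) :=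
      LinearMap.pi fun i => if h : ∃ k, j.succAbove k = i then LinearMap.proj h.choose else 0
    refine hmin t (Nat.lt_succ_self t) ⟨f ∘ₗ ins, fun m => ?_⟩
    obtain ⟨u, rfl⟩ := hf m
    refine ⟨fun k => (u - (u j * c) • v) (j.succAbove k), ?_⟩
    have : ins (fun k => (u - (u j * c) • v) (j.succAbove k)) = u - (u j * c) • v := by
      ext i
      by_cases h : ∃ k, j.succAbove k = i
      · simp only [ins, LinearMap.pi_apply, dif_pos h, LinearMap.proj_apply]
        rw [h.choose_spec]
      · simp only [ins, LinearMap.pi_apply, dif_neg h]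
        have : i = j := by
          by_contra hij
          exact h (Fin.exists_succAbove_eq hij)
        subst this
        simp [mul_assoc, hc]
    rw [LinearMap.comp_apply, this, map_sub, map_smul, LinearMap.mem_ker.1 hv]
    simp

theorem exists_minimalFreeResolution {R : Type u} [CommRing R] [IsNoetherianRing R]
    [IsLocalRing R] (M : Type u) [AddCommGroup M] [Module R M] [Module.Finite R M] :
    Nonempty (MinimalFreeResolution R M) := by
  obtain ⟨s₀, aug, haug, hker⟩ := exists_minimal_cover (R := R) M
  have cov := fun p : (Σ s : ℕ, Submodule R (Fin s → R)) => exists_minimal_cover (R := R) p.2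
  choose cs cf csurj cker using cov
  -- the `i`-th syzygy, as a submodule of the `i`-th free module
  let st : ℕ → (Σ s : ℕ, Submodule R (Fin s → R)) := fun i =>
    Nat.rec ⟨s₀, LinearMap.ker aug⟩ (fun _ p => ⟨cs p, LinearMap.ker (cf p)⟩) i
  have hrange : ∀ i, LinearMap.range ((st i).2.subtype ∘ₗ cf (st i)) = (st i).2 := fun i => by
    rw [LinearMap.range_comp, LinearMap.range_eq_top.2 (csurj _), Submodule.map_top,
      Submodule.range_subtype]
  refine ⟨{ rank := fun i => (st i).1, aug := aug, d := fun i => (st i).2.subtype ∘ₗ cf (st i),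
            aug_surjective := haug, exact_aug := ?_, exact := ?_, minimal := ?_ }⟩
  · exact (hrange 0).symm
  · intro i
    rw [hrange (i + 1), LinearMap.ker_comp, Submodule.ker_subtype, Submodule.comap_bot]
  · intro i
    rw [hrange i]
    cases i with
    | zero => exact hker
    | succ i => exact cker _

theorem MinimalFreeResolution.rank_succ_eq_zero {R : Type u} [CommRing R] [IsLocalRing R]
    {M : Type u} [AddCommGroup M] [Module R M] (F : MinimalFreeResolution R M) {i : ℕ}
    (hi : F.rank i = 0) : F.rank (i + 1) = 0 := by
  by_contra h
  have : IsEmpty (Fin (F.rank i)) := by rw [hi]; infer_instance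
  have htop : LinearMap.ker (F.d i) = ⊤ := by
    rw [LinearMap.ker_eq_top]; ext v j; exact isEmptyElim j
  have h1 : (fun _ => 1 : Fin (F.rank (i + 1)) → R) ∈
      maximalIdeal R • (⊤ : Submodule R (Fin (F.rank (i + 1)) → R)) :=
    F.minimal (i + 1) (by rw [← F.exact, htop]; trivial)
  rw [mem_smul_top_pi_iff] at h1
  exact (mem_maximalIdeal _).1 (h1 ⟨0, Nat.pos_of_ne_zero h⟩) isUnit_one

/-! ### Closure properties of thick subcategories -/

namespace IsThickSubcat

variable {R : Type u} [CommRing R] {P : ModuleCat.{u} R → Prop}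
variable {A B C : Type u} [AddCommGroup A] [Module R A] [AddCommGroup B] [Module R B]
  [AddCommGroup C] [Module R C]

theorem right (hP : IsThickSubcat R P) (f : A →ₗ[R] B) (g : B →ₗ[R] C)
    (hf : Function.Injective f) (hg : Function.Surjective g)
    (h : LinearMap.ker g = LinearMap.range f)
    (hA : P (ModuleCat.of R A)) (hB : P (ModuleCat.of R B)) : P (ModuleCat.of R C) :=
  (hP.two_of_three (.of R A) (.of R B) (.of R C) f g hf hg h).1 hA hB

theorem mid (hP : IsThickSubcat R P) (f : A →ₗ[R] B) (g : B →ₗ[R] C)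
    (hf : Function.Injective f) (hg : Function.Surjective g)
    (h : LinearMap.ker g = LinearMap.range f)
    (hA : P (ModuleCat.of R A)) (hC : P (ModuleCat.of R C)) : P (ModuleCat.of R B) :=
  (hP.two_of_three (.of R A) (.of R B) (.of R C) f g hf hg h).2.1 hA hC

theorem left (hP : IsThickSubcat R P) (f : A →ₗ[R] B) (g : B →ₗ[R] C)
    (hf : Function.Injective f) (hg : Function.Surjective g)
    (h : LinearMap.ker g = LinearMap.range f)
    (hB : P (ModuleCat.of R B)) (hC : P (ModuleCat.of R C)) : P (ModuleCat.of R A) :=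
  (hP.two_of_three (.of R A) (.of R B) (.of R C) f g hf hg h).2.2 hB hC

theorem iso (hP : IsThickSubcat R P) (e : A ≃ₗ[R] B) (hA : P (ModuleCat.of R A)) :
    P (ModuleCat.of R B) :=
  hP.iso_closed (.of R A) (.of R B) ⟨e⟩ hA

theorem summand (hP : IsThickSubcat R P) (ι : B →ₗ[R] A) (π : A →ₗ[R] B)
    (h : π.comp ι = LinearMap.id) (hA : P (ModuleCat.of R A)) : P (ModuleCat.of R B) :=
  hP.summand_closed (.of R A) (.of R B) ⟨ι, π, h⟩ hA

theorem ker_of_surjective (hP : IsThickSubcat R P) (g : B →ₗ[R] C) (hg : Function.Surjective g)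
    (hB : P (ModuleCat.of R B)) (hC : P (ModuleCat.of R C)) :
    P (ModuleCat.of R (LinearMap.ker g)) :=
  hP.left (LinearMap.ker g).subtype g Subtype.val_injective hg (by simp) hB hC

theorem pi (hP : IsThickSubcat R P) (hA : P (ModuleCat.of R A)) (n : ℕ) :
    P (ModuleCat.of R (Fin n → A)) := by
  induction n with
  | zero => exact hP.summand (A := A) 0 0 (LinearMap.ext fun v => funext fun i => i.elim0) hA
  | succ n ih =>
    let g : (Fin (n + 1) → A) →ₗ[R] (Fin n → A) := LinearMap.funLeft R A Fin.succ
    let f : A →ₗ[R] (Fin (n + 1) → A) := LinearMap.single R (fun _ => A) 0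
    refine hP.mid f g (Pi.single_injective (M := fun _ => A) 0) ?_ ?_ hA ih
    · exact LinearMap.funLeft_surjective_of_injective _ _ _ (Fin.succ_injective n)
    · ext v
      constructor
      · intro hv
        refine ⟨v 0, ?_⟩
        ext i
        refine Fin.cases ?_ (fun j => ?_) i
        · simp [f]
        · have := congrFun (LinearMap.mem_ker.1 hv) j
          simpa [f, g, LinearMap.funLeft_apply] using this.symm
      · rintro ⟨a, rfl⟩
        ext j
        simp [f, g, LinearMap.funLeft_apply]

/-- If the cokernel of a map between members lies in a thick subcategory, so does its kernel. -/
theorem ker_of_coker (hP : IsThickSubcat R P) (g : B →ₗ[R] C)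
    (hB : P (ModuleCat.of R B)) (hC : P (ModuleCat.of R C))
    (hcoker : P (ModuleCat.of R (C ⧸ LinearMap.range g))) :
    P (ModuleCat.of R (LinearMap.ker g)) := by
  have hr : P (ModuleCat.of R (LinearMap.range g)) :=
    hP.left (LinearMap.range g).subtype (LinearMap.range g).mkQ Subtype.val_injective
      (Submodule.mkQ_surjective _) (by simp) hC hcoker
  refine hP.left (LinearMap.ker g).subtype g.rangeRestrict Subtype.val_injective
    g.surjective_rangeRestrict (by simp) hB hr

end IsThickSubcat

/-! ### Matrices acting on powers of a module -/

/-- The `R`-linear map `E^b → E^a` given by an `a × b` matrix over `R`. -/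
def matAct {R : Type u} [CommRing R] (E : Type u) [AddCommGroup E] [Module R E] {a b : ℕ}
    (A : Matrix (Fin a) (Fin b) R) : (Fin b → E) →ₗ[R] (Fin a → E) :=
  LinearMap.pi fun i => ∑ j, A i j • LinearMap.proj j

section matAct

variable {R : Type u} [CommRing R] {E E' : Type u} [AddCommGroup E] [Module R E]
  [AddCommGroup E'] [Module R E'] {a b : ℕ} (A : Matrix (Fin a) (Fin b) R)

theorem matAct_apply (v : Fin b → E) (i : Fin a) : matAct E A v i = ∑ j, A i j • v j := by
  simp [matAct]

theorem matAct_comp (φ : E →ₗ[R] E') (v : Fin b → E) :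
    matAct E' A (fun j => φ (v j)) = fun i => φ (matAct E A v i) := by
  ext i
  simp [matAct_apply]

theorem matAct_mem (U : Submodule R E) (v : Fin b → E) (hv : ∀ j, v j ∈ U) (i : Fin a) :
    matAct E A v i ∈ U := by
  rw [matAct_apply]
  exact U.sum_mem fun j _ => U.smul_mem _ (hv j)

theorem matAct_toMatrix' (f : (Fin b → R) →ₗ[R] (Fin a → R)) :
    matAct R (LinearMap.toMatrix' f) = f := by
  refine LinearMap.ext fun v => funext fun i => ?_
  conv_rhs => rw [← Matrix.toLin'_toMatrix' f]
  rw [matAct_apply, Matrix.toLin'_apply]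
  rfl

end matAct

/-- Exactness of the sequence `⋯ → E^{r 2} → E^{r 1} → E^{r 0}`, given by matrices over `R`, at
every spot but the last. -/
def ExactOn {R : Type u} [CommRing R] (E : Type u) [AddCommGroup E] [Module R E] (r : ℕ → ℕ)
    (A : ∀ i, Matrix (Fin (r i)) (Fin (r (i + 1))) R) : Prop :=
  ∀ i, LinearMap.ker (matAct E (A i)) = LinearMap.range (matAct E (A (i + 1)))

/-- The projection `U ⊕ V → V`, characterised by `w - p w ∈ U`. -/
theorem exists_projection {R : Type u} [CommRing R] {E : Type u} [AddCommGroup E] [Module R E]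
    (U V : Submodule R E) (hUV : U ⊓ V = ⊥) :
    ∃ p : ↥(U ⊔ V) →ₗ[R] V, ∀ w : ↥(U ⊔ V), (w : E) - p w ∈ U := by
  have hinj : Function.Injective (U.subtype.coprod V.subtype) := by
    rw [← LinearMap.ker_eq_bot, LinearMap.ker_coprod_of_disjoint_range]
    · simp
    · simpa [disjoint_iff] using hUV
  have hr : U ⊔ V = LinearMap.range (U.subtype.coprod V.subtype) := by
    simp [LinearMap.range_coprod]
  let e := LinearEquiv.ofInjective _ hinj
  refine ⟨LinearMap.snd R U V ∘ₗ e.symm.toLinearMap ∘ₗ (LinearEquiv.ofEq _ _ hr).toLinearMap,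
    fun w => ?_⟩
  obtain ⟨z, hz⟩ := e.surjective (LinearEquiv.ofEq _ _ hr w)
  have hw : (w : E) = z.1 + z.2 := by
    have := congrArg Subtype.val hz
    simpa [e] using this.symm
  simp only [LinearMap.comp_apply, LinearEquiv.coe_coe, ← hz, LinearEquiv.symm_apply_apply,
    LinearMap.snd_apply, hw]
  simp

theorem eq_of_sub_mem {R : Type u} [CommRing R] {E : Type u} [AddCommGroup E] [Module R E]
    {U V : Submodule R E} (hUV : U ⊓ V = ⊥) {w v v' : E} (hv : v ∈ V) (hv' : v' ∈ V)
    (h : w - v ∈ U) (h' : w - v' ∈ U) : v = v' := by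
  have hm : v' - v ∈ U ⊓ V :=
    ⟨by have := U.sub_mem h h'; rwa [sub_sub_sub_cancel_left] at this, V.sub_mem hv' hv⟩
  rw [hUV, Submodule.mem_bot] at hm
  exact (sub_eq_zero.1 hm).symm

/-! ### A shift of an exact sequence, modulo a regular element -/

section Step

open scoped Pointwise

variable {R : Type u} [CommRing R] {E : Type u} [AddCommGroup E] [Module R E] {r : ℕ → ℕ}
  {A : ∀ i, Matrix (Fin (r i)) (Fin (r (i + 1))) R} {c : R}

theorem exists_lift_pi (N : Submodule R E) {n : ℕ} (w : Fin n → E ⧸ N) :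
    ∃ v : Fin n → E, (fun j => N.mkQ (v j)) = w := by
  choose v hv using fun j => N.mkQ_surjective (w j)
  exact ⟨v, funext hv⟩

theorem exists_smul_of_mkQ_eq {n : ℕ} {v w : Fin n → E}
    (h : (fun j => (c • (⊤ : Submodule R E)).mkQ (v j)) =
      fun j => (c • (⊤ : Submodule R E)).mkQ (w j)) :
    ∃ u : Fin n → E, v = w + c • u := by
  have : ∀ j, ∃ u : E, c • u = v j - w j := fun j => by
    have h1 := congrFun h j
    rw [← sub_eq_zero, ← map_sub, Submodule.mkQ_apply, Submodule.Quotient.mk_eq_zero,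
      Submodule.mem_smul_pointwise_iff_exists] at h1
    obtain ⟨u, -, hu⟩ := h1
    exact ⟨u, hu⟩
  choose u hu using this
  exact ⟨u, funext fun j => by simp [hu]⟩

theorem mkQ_smul_eq_zero (u : E) : (c • (⊤ : Submodule R E)).mkQ (c • u) = 0 := by
  rw [Submodule.mkQ_apply, Submodule.Quotient.mk_eq_zero]
  exact Submodule.smul_mem_pointwise_smul _ _ _ trivial

theorem smul_pi_cancel (hc : IsSMulRegular E c) {n : ℕ} {v : Fin n → E} (h : c • v = 0) :
    v = 0 :=
  funext fun j => hc (by simpa using congrFun h j)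

theorem ExactOn.comp_eq_zero (hA : ExactOn E r A) (i : ℕ) (v : Fin (r (i + 1 + 1)) → E) :
    matAct E (A i) (matAct E (A (i + 1)) v) = 0 :=
  LinearMap.mem_ker.1 (by rw [hA i]; exact ⟨v, rfl⟩)

theorem ExactOn.exists_of_eq_zero (hA : ExactOn E r A) (i : ℕ) {v : Fin (r (i + 1)) → E}
    (hv : matAct E (A i) v = 0) : ∃ w, matAct E (A (i + 1)) w = v := by
  have : v ∈ LinearMap.ker (matAct E (A i)) := hv
  rwa [hA i] at this

/-- Modulo an `E`-regular element the exact sequence stays exact, apart from the last spot. -/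
theorem ExactOn.quotSMulTop (hA : ExactOn E r A) (hc : IsSMulRegular E c) :
    ExactOn (QuotSMulTop c E) (fun i => r (i + 1)) (fun i => A (i + 1)) := by
  intro i
  ext v'
  obtain ⟨v, rfl⟩ := exists_lift_pi _ v'
  constructor
  · intro hv
    rw [LinearMap.mem_ker, matAct_comp] at hv
    obtain ⟨w, hw⟩ := exists_smul_of_mkQ_eq (w := 0) (hv.trans (by ext; simp))
    rw [zero_add] at hw
    have hw0 : matAct E (A i) w = 0 := smul_pi_cancel hc (by
      rw [← map_smul, ← hw, hA.comp_eq_zero])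
    obtain ⟨u, rfl⟩ := hA.exists_of_eq_zero i hw0
    have hvu : matAct E (A (i + 1)) (v - c • u) = 0 := by
      rw [map_sub, map_smul, hw, sub_self]
    obtain ⟨t, ht⟩ := hA.exists_of_eq_zero (i + 1) hvu
    refine ⟨fun j => (c • (⊤ : Submodule R E)).mkQ (t j), ?_⟩
    rw [matAct_comp, ht]
    ext j
    rw [Pi.sub_apply, map_sub, Pi.smul_apply, mkQ_smul_eq_zero, sub_zero]
  · rintro ⟨w', hw⟩
    obtain ⟨w, rfl⟩ := exists_lift_pi _ w'
    rw [LinearMap.mem_ker, ← hw, matAct_comp, matAct_comp, hA.comp_eq_zero]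
    ext; simp

variable {P : ModuleCat.{u} R → Prop}

theorem IsThickSubcat.quotSMulTop (hP : IsThickSubcat R P) (hc : IsSMulRegular E c)
    (hE : P (ModuleCat.of R E)) : P (ModuleCat.of R (QuotSMulTop c E)) := by
  refine hP.right (LinearMap.lsmul R E c) (c • (⊤ : Submodule R E)).mkQ hc
    (Submodule.mkQ_surjective _) ?_ hE hE
  ext v
  rw [Submodule.ker_mkQ, Submodule.mem_smul_pointwise_iff_exists]
  simp

/-- If the cokernel of `E^{r 1} → E^{r 0}` lies in a thick subcategory with `E`, so does the
cokernel of `(E/cE)^{r 2} → (E/cE)^{r 1}`: it is the quotient by `c` of the first syzygy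
`C = coker (E^{r 2} → E^{r 1})`, which embeds into `E^{r 0}`. -/
theorem IsThickSubcat.coker_quotSMulTop (hP : IsThickSubcat R P) (hA : ExactOn E r A)
    (hc : IsSMulRegular E c) (hE : P (ModuleCat.of R E))
    (hM : P (ModuleCat.of R ((Fin (r 0) → E) ⧸ LinearMap.range (matAct E (A 0))))) :
    P (ModuleCat.of R ((Fin (r 1) → QuotSMulTop c E) ⧸
      LinearMap.range (matAct (QuotSMulTop c E) (A 1)))) := by
  let N := LinearMap.range (matAct E (A 1))
  let N' := LinearMap.range (matAct (QuotSMulTop c E) (A 1))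
  have hC : P (ModuleCat.of R ((Fin (r 1) → E) ⧸ N)) := by
    refine hP.left (N.liftQ (matAct E (A 0)) (hA 0).ge)
      (LinearMap.range (matAct E (A 0))).mkQ ?_ (Submodule.mkQ_surjective _) ?_ (hP.pi hE _) hM
    · rw [← LinearMap.ker_eq_bot]
      exact Submodule.ker_liftQ_eq_bot _ _ _ (hA 0).le
    · rw [Submodule.ker_mkQ, Submodule.range_liftQ]
  let q : (Fin (r 1) → E) →ₗ[R] (Fin (r 1) → QuotSMulTop c E) :=
    LinearMap.pi fun j => (c • (⊤ : Submodule R E)).mkQ ∘ₗ LinearMap.proj j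
  have hN : N ≤ N'.comap q := by
    rintro _ ⟨w, rfl⟩
    exact ⟨fun j => (c • (⊤ : Submodule R E)).mkQ (w j), matAct_comp _ _ _⟩
  refine hP.right (LinearMap.lsmul R ((Fin (r 1) → E) ⧸ N) c) (N.mapQ N' q hN) ?_ ?_ ?_ hC hC
  · rw [← LinearMap.ker_eq_bot, LinearMap.ker_eq_bot']
    intro v hv
    obtain ⟨v, rfl⟩ := N.mkQ_surjective v
    rw [LinearMap.lsmul_apply, ← map_smul, Submodule.mkQ_apply,
      Submodule.Quotient.mk_eq_zero] at hv
    obtain ⟨w, hw⟩ := hv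
    rw [Submodule.mkQ_apply, Submodule.Quotient.mk_eq_zero]
    refine hA.exists_of_eq_zero 0 (smul_pi_cancel hc ?_)
    rw [← map_smul, ← hw, hA.comp_eq_zero]
  · intro y
    obtain ⟨y, rfl⟩ := N'.mkQ_surjective y
    obtain ⟨v, rfl⟩ := exists_lift_pi _ y
    exact ⟨N.mkQ v, rfl⟩
  · ext v
    obtain ⟨v, rfl⟩ := N.mkQ_surjective v
    constructor
    · intro hv
      rw [LinearMap.mem_ker, Submodule.mkQ_apply, Submodule.mapQ_apply,
        Submodule.Quotient.mk_eq_zero] at hv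
      obtain ⟨w', hw⟩ := hv
      obtain ⟨w, rfl⟩ := exists_lift_pi _ w'
      rw [matAct_comp] at hw
      obtain ⟨u, hu⟩ := exists_smul_of_mkQ_eq (v := v) hw.symm
      refine ⟨N.mkQ u, ?_⟩
      rw [LinearMap.lsmul_apply, ← map_smul, hu, map_add, Submodule.mkQ_apply,
        Submodule.mkQ_apply, (Submodule.Quotient.mk_eq_zero N).2 ⟨w, rfl⟩, zero_add]
    · rintro ⟨u, hu⟩
      obtain ⟨u, rfl⟩ := N.mkQ_surjective u
      rw [← hu, LinearMap.mem_ker, LinearMap.lsmul_apply, ← map_smul, Submodule.mkQ_apply,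
        Submodule.mapQ_apply]
      convert (Submodule.Quotient.mk_zero N') using 2
      ext j
      exact mkQ_smul_eq_zero _

end Step

/-! ### Decomposable maximal ideals -/

section Decomposable

variable {R : Type u} [CommRing R] {P : ModuleCat.{u} R → Prop} {q I J : Submodule R R}

theorem map_mkQ_inf_eq_bot (hqI : q ≤ I) (hinf : I ⊓ J ≤ q) :
    I.map q.mkQ ⊓ J.map q.mkQ = ⊥ := by
  rw [eq_bot_iff]
  rintro _ ⟨⟨a, ha, rfl⟩, ⟨b, hb, hab⟩⟩
  rw [Submodule.mkQ_apply, Submodule.mkQ_apply, Submodule.Quotient.eq] at hab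
  have hbI : b ∈ I := by simpa using I.add_mem (hqI hab) ha
  have hbq : b ∈ q := hinf ⟨hbI, hb⟩
  rw [Submodule.mem_bot, Submodule.mkQ_apply, Submodule.Quotient.mk_eq_zero]
  simpa using q.sub_mem hbq hab

theorem smul_map_mkQ_eq_zero (hinf : I ⊓ J ≤ q) {a : R} (ha : a ∈ J) {e : R ⧸ q}
    (he : e ∈ I.map q.mkQ) : a • e = 0 := by
  obtain ⟨b, hb, rfl⟩ := he
  rw [← map_smul, Submodule.mkQ_apply, Submodule.Quotient.mk_eq_zero]
  refine hinf ⟨I.smul_mem a hb, ?_⟩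
  rw [smul_eq_mul, mul_comm]
  exact J.smul_mem b ha

theorem map_mkQ_ne_bot (hqJ : q ≤ J) (hJ : J ≠ q) : J.map q.mkQ ≠ ⊥ := by
  intro h
  rw [eq_bot_iff, Submodule.map_le_iff_le_comap, Submodule.comap_bot, Submodule.ker_mkQ] at h
  exact hJ (le_antisymm h hqJ)

/-- Let `X ≠ 0` be annihilated by `J`. In a minimal cover `(R/q)^s → X` the kernel lies in
`𝔪(R/q)^s = (I/q)^s ⊕ (J/q)^s` and contains `(J/q)^s`; hence `J/q` is a direct summand of it. -/
theorem mem_of_annihilated [IsLocalRing R] (hP : IsThickSubcat R P) (hqI : q ≤ I)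
    (hqJ : q ≤ J) (hsup : I ⊔ J = maximalIdeal R) (hinf : I ⊓ J ≤ q) (hE : P (ModuleCat.of R (R ⧸ q)))
    (X : Type u) [AddCommGroup X] [Module R X] [Nontrivial X] (hX : P (ModuleCat.of R X))
    (hJX : ∀ a ∈ J, ∀ x : X, a • x = 0) : P (ModuleCat.of R ↥(J.map q.mkQ)) := by
  have : Module.Finite R X := hP.fg _ hX
  obtain ⟨s, f, hf, hker⟩ := exists_minimal_cover (R := R) X
  have hs : 0 < s := by
    rcases Nat.eq_zero_or_pos s with rfl | h
    · exact absurd hf.subsingleton (not_subsingleton X)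
    · exact h
  let i₀ : Fin s := ⟨0, hs⟩
  let g : (Fin s → R ⧸ q) →ₗ[R] X := ∑ j, (q.liftQ (f ∘ₗ LinearMap.single R (fun _ => R) j)
    (fun a ha => by
      have : Pi.single j a = a • (Pi.single j 1 : Fin s → R) := by
        rw [← Pi.single_smul, smul_eq_mul, mul_one]
      rw [LinearMap.mem_ker, LinearMap.comp_apply, LinearMap.single_apply, this, map_smul,
        hJX a (hqJ ha)])) ∘ₗ LinearMap.proj j
  have hg : ∀ v : Fin s → R, g (fun j => q.mkQ (v j)) = f v := by
    intro v
    simp only [g, LinearMap.sum_apply, LinearMap.comp_apply, LinearMap.proj_apply,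
      Submodule.mkQ_apply, Submodule.liftQ_apply, LinearMap.single_apply]
    rw [← map_sum]
    congr 1
    exact Finset.univ_sum_single v
  have hgs : Function.Surjective g := fun x => by
    obtain ⟨v, rfl⟩ := hf x
    exact ⟨_, hg v⟩
  have hL := hP.ker_of_surjective g hgs (hP.pi hE s) hX
  have hdisj := map_mkQ_inf_eq_bot hqI hinf
  obtain ⟨p, hp⟩ := exists_projection (I.map q.mkQ) (J.map q.mkQ) hdisj
  have hcoord : ∀ w ∈ LinearMap.ker g, w i₀ ∈ I.map q.mkQ ⊔ J.map q.mkQ := by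
    intro w hw
    obtain ⟨v, rfl⟩ := exists_lift_pi _ w
    rw [LinearMap.mem_ker, hg] at hw
    have := (mem_smul_top_pi_iff _ v).1 (hker hw) i₀
    rw [← Submodule.map_sup, hsup]
    exact ⟨_, this, rfl⟩
  have hsingle : ∀ w ∈ J.map q.mkQ, (Pi.single i₀ w : Fin s → R ⧸ q) ∈ LinearMap.ker g := by
    rintro _ ⟨b, hb, rfl⟩
    have h1 : (Pi.single i₀ (q.mkQ b) : Fin s → R ⧸ q) =
        b • fun j => q.mkQ ((Pi.single i₀ 1 : Fin s → R) j) := by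
      ext j
      by_cases hj : j = i₀
      · subst hj
        rw [Pi.smul_apply, ← map_smul]
        simp
      · rw [Pi.smul_apply, ← map_smul]
        simp [hj]
    rw [LinearMap.mem_ker, h1, map_smul, hJX b hb]
  let ι : ↥(J.map q.mkQ) →ₗ[R] LinearMap.ker g :=
    LinearMap.codRestrict _ (LinearMap.single R (fun _ => R ⧸ q) i₀ ∘ₗ (J.map q.mkQ).subtype)
      (fun w => hsingle _ w.2)
  let κ : LinearMap.ker g →ₗ[R] ↥(I.map q.mkQ ⊔ J.map q.mkQ) :=
    LinearMap.codRestrict _ (LinearMap.proj i₀ ∘ₗ (LinearMap.ker g).subtype)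
      (fun w => hcoord _ w.2)
  refine hP.summand ι (p ∘ₗ κ) (LinearMap.ext fun w => Subtype.ext ?_) hL
  refine eq_of_sub_mem hdisj (Subtype.mem _) w.2 (w := (w : R ⧸ q)) ?_ (by simp)
  have h1 : ((κ (ι w) : ↥(I.map q.mkQ ⊔ J.map q.mkQ)) : R ⧸ q) = w :=
    Pi.single_eq_same (M := fun _ : Fin s => R ⧸ q) i₀ (w : R ⧸ q)
  have h2 := hp (κ (ι w))
  rwa [h1] at h2

/-- A nonzero module annihilated by `J` generates the residue field together with `R/q`. -/
theorem residueField_mem_of_annihilated [IsLocalRing R] (hP : IsThickSubcat R P) (hqI : q ≤ I)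
    (hqJ : q ≤ J) (hsup : I ⊔ J = maximalIdeal R) (hinf : I ⊓ J ≤ q) (hJ : J ≠ q)
    (hE : P (ModuleCat.of R (R ⧸ q)))
    (X : Type u) [AddCommGroup X] [Module R X] [Nontrivial X] (hX : P (ModuleCat.of R X))
    (hJX : ∀ a ∈ J, ∀ x : X, a • x = 0) : P (ModuleCat.of R (ResidueField R)) := by
  have hV := mem_of_annihilated hP hqI hqJ hsup hinf hE X hX hJX
  have hVnt : Nontrivial ↥(J.map q.mkQ) :=
    Submodule.nontrivial_iff_ne_bot.2 (map_mkQ_ne_bot hqJ hJ)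
  have hinf' : J ⊓ I ≤ q := by rwa [inf_comm]
  have hU := mem_of_annihilated hP hqJ hqI (by rw [sup_comm, hsup]) hinf' hE _ hV
    (fun a ha x => Subtype.ext (smul_map_mkQ_eq_zero hinf' ha x.2))
  have hdisj := map_mkQ_inf_eq_bot hqI hinf
  obtain ⟨p, hp⟩ := exists_projection (I.map q.mkQ) (J.map q.mkQ) hdisj
  have hW : P (ModuleCat.of R ↥(I.map q.mkQ ⊔ J.map q.mkQ)) := by
    refine hP.mid (Submodule.inclusion le_sup_left) p (Submodule.inclusion_injective _) ?_ ?_ hU hV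
    · intro w
      refine ⟨⟨w, Submodule.mem_sup_right w.2⟩, Subtype.ext ?_⟩
      exact eq_of_sub_mem hdisj (Subtype.mem _) w.2 (hp _) (by simp)
    · ext w
      rw [Submodule.range_inclusion, LinearMap.mem_ker, Submodule.mem_comap,
        Submodule.subtype_apply]
      constructor
      · intro h
        simpa [h] using hp w
      · intro h
        refine Subtype.ext ?_
        exact eq_of_sub_mem hdisj (Subtype.mem _) (Submodule.zero_mem _) (hp w) (by simpa using h)
  have hqm : q ≤ maximalIdeal R := hqI.trans (hsup ▸ le_sup_left)
  let ρ : (R ⧸ q) →ₗ[R] ResidueField R :=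
    q.liftQ (Algebra.linearMap R (ResidueField R)) (fun a ha =>
      (residue_eq_zero_iff a).2 (hqm ha))
  refine hP.right (Submodule.subtype _) ρ Subtype.val_injective ?_ ?_ hW hE
  · intro y
    obtain ⟨a, rfl⟩ := residue_surjective y
    exact ⟨q.mkQ a, rfl⟩
  · ext w
    obtain ⟨a, rfl⟩ := q.mkQ_surjective w
    rw [Submodule.range_subtype, ← Submodule.map_sup, hsup, LinearMap.mem_ker]
    have h1 : ρ (q.mkQ a) = residue R a := rfl
    rw [h1, residue_eq_zero_iff]
    constructor
    · intro h
      exact ⟨a, h, rfl⟩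
    · rintro ⟨b, hb, hab⟩
      rw [Submodule.mkQ_apply, Submodule.mkQ_apply, Submodule.Quotient.eq] at hab
      have := (maximalIdeal R).sub_mem hb (hqm hab)
      simpa using this

/-- Matrices over `R` preserve `U^b ⊕ V^b`. So if the kernel of a matrix on `E^b` lies in
`(U ⊕ V)^b`, then its part in `V^b` is a direct summand of it. -/
theorem ker_inter_mem (hP : IsThickSubcat R P) {E : Type u} [AddCommGroup E] [Module R E]
    {U V : Submodule R E} (hUV : U ⊓ V = ⊥) {a b : ℕ} (A : Matrix (Fin a) (Fin b) R)
    (hK : ∀ v ∈ LinearMap.ker (matAct E A), ∀ j, v j ∈ U ⊔ V)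
    (hPK : P (ModuleCat.of R (LinearMap.ker (matAct E A)))) :
    P (ModuleCat.of R ↥(LinearMap.ker (matAct E A) ⊓
      Submodule.pi Set.univ (fun _ : Fin b => V))) := by
  obtain ⟨p, hp⟩ := exists_projection U V hUV
  let π₀ : LinearMap.ker (matAct E A) →ₗ[R] (Fin b → E) := LinearMap.pi fun j =>
    V.subtype ∘ₗ p ∘ₗ LinearMap.codRestrict _
      (LinearMap.proj j ∘ₗ (LinearMap.ker (matAct E A)).subtype) (fun v => hK _ v.2 j)
  have hπV : ∀ v j, π₀ v j ∈ V := fun v j => Subtype.mem _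
  have hπU : ∀ (v : LinearMap.ker (matAct E A)) j, (v : Fin b → E) j - π₀ v j ∈ U :=
    fun v j => hp ⟨(v : Fin b → E) j, hK _ v.2 j⟩
  have hπ : ∀ v, π₀ v ∈ LinearMap.ker (matAct E A) ⊓
      Submodule.pi Set.univ (fun _ : Fin b => V) := by
    refine fun v => ⟨?_, fun j _ => hπV v j⟩
    refine LinearMap.mem_ker.2 ?_
    ext i
    have h1 := matAct_mem A V (π₀ v) (hπV v) i
    have h2 := matAct_mem A U ((v : Fin b → E) - π₀ v) (hπU v) i
    rw [map_sub, LinearMap.mem_ker.1 v.2] at h2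
    exact eq_of_sub_mem (w := 0) hUV h1 V.zero_mem h2 (by simp)
  refine hP.summand (Submodule.inclusion inf_le_left) (LinearMap.codRestrict _ π₀ hπ) ?_ hPK
  refine LinearMap.ext fun v => Subtype.ext (funext fun j => ?_)
  exact eq_of_sub_mem (w := (v : Fin b → E) j) hUV (hπV _ j) (v.2.2 j trivial)
    (hπU (Submodule.inclusion inf_le_left v) j) (by simp)

end Decomposable

/-! ### Reduction modulo the regular sequence -/

section Reduction

variable {R : Type u} [CommRing R] [IsLocalRing R] {P : ModuleCat.{u} R → Prop}
  {q I J : Submodule R R}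

/-- The case of an empty regular sequence: the second syzygy over `R/q` is nonzero and is the
direct sum of a module annihilated by `I` and one annihilated by `J`. -/
theorem residueField_mem_of_exactOn (hP : IsThickSubcat R P) (hqI : q ≤ I) (hqJ : q ≤ J)
    (hsup : I ⊔ J = maximalIdeal R) (hinf : I ⊓ J ≤ q) (hI : I ≠ q) (hJ : J ≠ q)
    {E : Type u} [AddCommGroup E] [Module R E] (φ : E ≃ₗ[R] R ⧸ q)
    {r : ℕ → ℕ} {A : ∀ i, Matrix (Fin (r i)) (Fin (r (i + 1))) R}
    (hmin : ∀ i a b, A i a b ∈ maximalIdeal R) (hr : r 2 ≠ 0) (hA : ExactOn E r A)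
    (hE : P (ModuleCat.of R E))
    (hM : P (ModuleCat.of R ((Fin (r 0) → E) ⧸ LinearMap.range (matAct E (A 0))))) :
    P (ModuleCat.of R (ResidueField R)) := by
  have hEq : P (ModuleCat.of R (R ⧸ q)) := hP.iso φ hE
  have hK := hP.ker_of_coker (matAct E (A 0)) (hP.pi hE _) (hP.pi hE _) hM
  have hrange : ∀ i (w : Fin (r (i + 1)) → E) j,
      φ (matAct E (A i) w j) ∈ Submodule.map q.mkQ (maximalIdeal R) := by
    intro i w j
    rw [matAct_apply, map_sum]
    refine Submodule.sum_mem _ fun k _ => ?_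
    obtain ⟨c, hc⟩ := q.mkQ_surjective (φ (w k))
    rw [map_smul, ← hc, ← map_smul]
    exact ⟨_, Ideal.mul_mem_right c _ (hmin i j k), rfl⟩
  have hKne : LinearMap.ker (matAct E (A 0)) ≠ ⊥ := by
    intro h0
    -- then `A 1` acts by zero, so `A 2` is surjective, although its image lies in `𝔪 E^{r 2}`
    let v : Fin (r 2) → E := fun _ => φ.symm (q.mkQ 1)
    have hv : matAct E (A 1) v = 0 := by
      have : matAct E (A 1) v ∈ LinearMap.ker (matAct E (A 0)) := by
        rw [hA 0]; exact ⟨v, rfl⟩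
      rwa [h0, Submodule.mem_bot] at this
    obtain ⟨w, hw⟩ := hA.exists_of_eq_zero 1 hv
    have h1 := hrange 2 w ⟨0, Nat.pos_of_ne_zero hr⟩
    rw [hw, LinearEquiv.apply_symm_apply] at h1
    obtain ⟨b, hb, hb1⟩ := h1
    rw [Submodule.mkQ_apply, Submodule.mkQ_apply, Submodule.Quotient.eq] at hb1
    have hqm : q ≤ maximalIdeal R := hqI.trans (hsup ▸ le_sup_left)
    have h2 : (1 : R) ∈ maximalIdeal R := by
      simpa using (maximalIdeal R).sub_mem hb (hqm hb1)
    exact (mem_maximalIdeal _).1 h2 isUnit_one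
  let U := (I.map q.mkQ).comap φ.toLinearMap
  let V := (J.map q.mkQ).comap φ.toLinearMap
  have hUV : U ⊓ V = ⊥ := by
    rw [← Submodule.comap_inf, map_mkQ_inf_eq_bot hqI hinf, Submodule.comap_bot,
      LinearEquiv.ker]
  have hVU : V ⊓ U = ⊥ := by rw [inf_comm, hUV]
  have hKUV : ∀ v ∈ LinearMap.ker (matAct E (A 0)), ∀ j, v j ∈ U ⊔ V := by
    intro v hv j
    rw [hA 0] at hv
    obtain ⟨w, rfl⟩ := hv
    have h1 := hrange 1 w j
    rw [← hsup, Submodule.map_sup] at h1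
    obtain ⟨y, hy, z, hz, hyz⟩ := Submodule.mem_sup.1 h1
    refine Submodule.mem_sup.2 ⟨φ.symm y, by simpa [U] using hy, φ.symm z, by simpa [V] using hz, ?_⟩
    rw [← map_add, hyz, LinearEquiv.symm_apply_apply]
  have hKV := ker_inter_mem hP hUV (A 0) hKUV hK
  have hKU := ker_inter_mem hP hVU (A 0) (fun v hv j => by rw [sup_comm]; exact hKUV v hv j) hK
  have hinf' : J ⊓ I ≤ q := by rwa [inf_comm]
  by_cases hne : LinearMap.ker (matAct E (A 0)) ⊓ Submodule.pi Set.univ (fun _ => V) = ⊥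
  · have hne' : LinearMap.ker (matAct E (A 0)) ⊓ Submodule.pi Set.univ (fun _ => U) ≠ ⊥ := by
      intro hne'
      apply hKne
      rw [eq_bot_iff]
      intro v hv
      choose y hy z hz hyz using fun j => Submodule.mem_sup.1 (hKUV v hv j)
      have hyz' : y + z = v := funext hyz
      have hy0 : matAct E (A 0) y = 0 := by
        ext i
        have h1 := matAct_mem (A 0) U y hy i
        have h2 := matAct_mem (A 0) V z hz i
        have h3 : matAct E (A 0) y i + matAct E (A 0) z i = 0 := by
          rw [← Pi.add_apply, ← map_add, hyz', LinearMap.mem_ker.1 hv, Pi.zero_apply]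
        refine eq_of_sub_mem (w := 0) hVU h1 U.zero_mem ?_ (by simp)
        rw [zero_sub, neg_eq_of_add_eq_zero_right h3]
        exact h2
      have hz0 : matAct E (A 0) z = 0 := by
        have := LinearMap.mem_ker.1 hv
        rwa [← hyz', map_add, hy0, zero_add] at this
      have hyb : y ∈ LinearMap.ker (matAct E (A 0)) ⊓ Submodule.pi Set.univ (fun _ => U) :=
        ⟨hy0, fun j _ => hy j⟩
      have hzb : z ∈ LinearMap.ker (matAct E (A 0)) ⊓ Submodule.pi Set.univ (fun _ => V) :=
        ⟨hz0, fun j _ => hz j⟩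
      rw [hne', Submodule.mem_bot] at hyb
      rw [hne, Submodule.mem_bot] at hzb
      rw [Submodule.mem_bot, ← hyz', hyb, hzb, add_zero]
    have := Submodule.nontrivial_iff_ne_bot.2 hne'
    refine residueField_mem_of_annihilated hP hqI hqJ hsup hinf hJ hEq _ hKU ?_
    refine fun a ha x => Subtype.ext (funext fun j => φ.injective ?_)
    have := smul_map_mkQ_eq_zero hinf ha (x.2.2 j trivial : φ (x.1 j) ∈ I.map q.mkQ)
    rw [← map_smul] at this
    simpa using this
  · have := Submodule.nontrivial_iff_ne_bot.2 hne
    refine residueField_mem_of_annihilated hP hqJ hqI (by rw [sup_comm, hsup]) hinf' hI hEq _ hKV ?_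
    refine fun a ha x => Subtype.ext (funext fun j => φ.injective ?_)
    have := smul_map_mkQ_eq_zero hinf' ha (x.2.2 j trivial : φ (x.1 j) ∈ J.map q.mkQ)
    rw [← map_smul] at this
    simpa using this

/-- Induction on the regular sequence: dividing by its first element and passing to the first
syzygy preserves all hypotheses. -/
theorem residueField_mem_of_isWeaklyRegular (hP : IsThickSubcat R P) (hqI : q ≤ I) (hqJ : q ≤ J)
    (hsup : I ⊔ J = maximalIdeal R) (hinf : I ⊓ J ≤ q) (hI : I ≠ q) (hJ : J ≠ q)
    (xs : List R) : ∀ (E : Type u) [AddCommGroup E] [Module R E]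
    (_ : (E ⧸ (Ideal.ofList xs • ⊤ : Submodule R E)) ≃ₗ[R] R ⧸ q)
    (r : ℕ → ℕ) (A : ∀ i, Matrix (Fin (r i)) (Fin (r (i + 1))) R)
    (_ : ∀ i a b, A i a b ∈ maximalIdeal R) (_ : r (xs.length + 2) ≠ 0) (_ : ExactOn E r A)
    (_ : RingTheory.Sequence.IsWeaklyRegular E xs) (_ : P (ModuleCat.of R E))
    (_ : P (ModuleCat.of R ((Fin (r 0) → E) ⧸ LinearMap.range (matAct E (A 0))))),
    P (ModuleCat.of R (ResidueField R)) := by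
  induction xs with
  | nil =>
    intro E _ _ e r A hmin hr hA _ hE hM
    have h0 : (Ideal.ofList ([] : List R) • ⊤ : Submodule R E) = ⊥ := by simp
    exact residueField_mem_of_exactOn hP hqI hqJ hsup hinf hI hJ
      ((Submodule.quotEquivOfEqBot _ h0).symm ≪≫ₗ e) hmin hr hA hE hM
  | cons c xs ih =>
    intro E _ _ e r A hmin hr hA hreg hE hM
    rw [RingTheory.Sequence.isWeaklyRegular_cons_iff] at hreg
    exact ih (QuotSMulTop c E)
      ((Submodule.quotOfListConsSMulTopEquivQuotSMulTopInner E c xs).symm ≪≫ₗ e)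
      (fun i => r (i + 1)) (fun i => A (i + 1)) (fun i => hmin (i + 1)) hr
      (hA.quotSMulTop hreg.1) hreg.2 (hP.quotSMulTop hreg.1 hE)
      (hP.coker_quotSMulTop hA hreg.1 hE hM)

end Reduction

/-- Decomposability of `𝔪/q`, in terms of ideals of `R` containing `q`. -/
theorem exists_ideals_of_decomposable {R : Type u} [CommRing R] (q m : Ideal R) (hqm : q ≤ m)
    (hdec : IsDecomposableModule (R ⧸ q) ↥(m.map (Ideal.Quotient.mk q))) :
    ∃ I J : Ideal R, q ≤ I ∧ q ≤ J ∧ I ⊔ J = m ∧ I ⊓ J ≤ q ∧ I ≠ q ∧ J ≠ q := by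
  obtain ⟨N₁, N₂, h₁, h₂, hinf, hsup⟩ := hdec
  let m' := m.map (Ideal.Quotient.mk q)
  let L : Submodule (R ⧸ q) m' → Ideal R := fun N =>
    Ideal.comap (Ideal.Quotient.mk q) (Submodule.map m'.subtype N)
  have hq : ∀ N, q ≤ L N := fun N a ha => by
    change Ideal.Quotient.mk q a ∈ Submodule.map m'.subtype N
    rw [Ideal.Quotient.eq_zero_iff_mem.2 ha]
    exact Submodule.zero_mem _
  have hne : ∀ N, N ≠ ⊥ → L N ≠ q := fun N hN h => hN (by
    rw [eq_bot_iff]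
    intro y hy
    obtain ⟨a, ha⟩ := Ideal.Quotient.mk_surjective (y : R ⧸ q)
    have h1 : a ∈ L N := ⟨y, hy, ha.symm⟩
    rw [h, ← Ideal.Quotient.eq_zero_iff_mem, ha] at h1
    exact Subtype.ext h1)
  have hle : ∀ N, L N ≤ m := by
    rintro N a ⟨y, -, hy⟩
    have h1 : Ideal.Quotient.mk q a ∈ m' := by
      rw [← hy]; exact y.2
    rwa [Ideal.mem_quotient_iff_mem hqm] at h1
  refine ⟨L N₁, L N₂, hq _, hq _, le_antisymm (sup_le (hle _) (hle _)) ?_, ?_, hne _ h₁, hne _ h₂⟩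
  · intro a ha
    have hy : (⟨Ideal.Quotient.mk q a, Ideal.mem_map_of_mem _ ha⟩ : m') ∈ N₁ ⊔ N₂ := by
      rw [hsup]; trivial
    obtain ⟨y, hy, z, hz, hyz⟩ := Submodule.mem_sup.1 hy
    obtain ⟨b, hb⟩ := Ideal.Quotient.mk_surjective (y : R ⧸ q)
    have hb1 : b ∈ L N₁ := ⟨y, hy, hb.symm⟩
    have hc1 : a - b ∈ L N₂ := ⟨z, hz, by
      rw [map_sub, hb]
      have := congrArg Subtype.val hyz
      exact eq_sub_of_add_eq' this⟩
    exact Submodule.mem_sup.2 ⟨b, hb1, a - b, hc1, by ring⟩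
  · rintro a ⟨⟨y, hy, hya⟩, ⟨z, hz, hza⟩⟩
    have hyz : y = z := Subtype.ext (hya.trans hza.symm)
    have h0 : y ∈ N₁ ⊓ N₂ := ⟨hy, hyz ▸ hz⟩
    rw [hinf, Submodule.mem_bot] at h0
    rw [← Ideal.Quotient.eq_zero_iff_mem, ← hya, h0]
    rfl

/-- **Proposition 6.2.** Suppose `𝔪` is quasi-decomposable with an `R`-regular sequence `𝐱` of
length `n`. If `pd_R M ≥ n + 2`, then the residue field `k` belongs to `thick_{mod R} {R, M}`. -/
theorem residue_field_mem_thick_closure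
    (R : Type u) [CommRing R] [IsNoetherianRing R] [IsLocalRing R]
    (x : List R) (hxm : ∀ a ∈ x, a ∈ maximalIdeal R)
    (hxreg : RingTheory.Sequence.IsRegular R x)
    (hdec : IsDecomposableModule (R ⧸ Ideal.ofList x)
      (↥((maximalIdeal R).map (Ideal.Quotient.mk (Ideal.ofList x)))))
    (M : Type u) [AddCommGroup M] [Module R M] [Module.Finite R M]
    (hpd : ¬ ProjDimLE R M (x.length + 1)) :
    ∀ P : ModuleCat.{u} R → Prop, IsThickSubcat R P →
      P (ModuleCat.of R R) → P (ModuleCat.of R M) →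
      P (ModuleCat.of R (IsLocalRing.ResidueField R)) := by
  intro P hP hR hM
  obtain ⟨F⟩ := exists_minimalFreeResolution (R := R) M
  have hrank : F.rank (x.length + 2) ≠ 0 := by
    intro h0
    refine hpd ⟨F, fun i hi => ?_⟩
    induction i, (show x.length + 2 ≤ i from hi) using Nat.le_induction with
    | base => exact h0
    | succ i hi' ih => exact F.rank_succ_eq_zero (ih hi')
  have hqm : Ideal.ofList x ≤ maximalIdeal R := Ideal.span_le.2 hxm
  obtain ⟨I, J, hqI, hqJ, hsup, hinf, hI, hJ⟩ := exists_ideals_of_decomposable _ _ hqm hdec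
  refine residueField_mem_of_isWeaklyRegular hP hqI hqJ hsup hinf hI hJ x R
    (Submodule.quotEquivOfEq _ _ (by simp)) F.rank (fun i => LinearMap.toMatrix' (F.d i))
    ?_ hrank ?_ hxreg.toIsWeaklyRegular hR ?_
  · intro i a b
    rw [LinearMap.toMatrix'_apply]
    exact (mem_smul_top_pi_iff _ _).1 (F.minimal i ⟨_, rfl⟩) a
  · intro i
    rw [matAct_toMatrix', matAct_toMatrix', F.exact]
  · rw [matAct_toMatrix']
    exact hP.iso ((Submodule.quotEquivOfEq _ _ F.exact_aug).symm ≪≫ₗ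
      F.aug.quotKerEquivOfSurjective F.aug_surjective).symm hM
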